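/- For every integer m ≥ 3, the identity X^{2^{m+2}-1} + 1 = (1 + X)·f_m(X)^2 + X·f_{m-1}(X)^2·f_m(X) + X^3·f_{m-1}(X)^4·f_m(X)^4 holds in F_2[X]. -/

import Mathlib

open Polynomial

/-- `fibSet m` is the set of fibbinary integers below `2^m`: integers in `{0,…,2^m-1}`
whose binary representation has no two consecutive ones. -/
noncomputable def fibSet (m : ℕ) : Finset ℕ :=
  @Finset.filter _ (fun i => ∀ j : ℕ, ¬(i.testBit j ∧ i.testBit (j + 1)))
    (Classical.decPred _) (Finset.range (2 ^ m))

/-- The `m`-th fibbinary polynomial over `F_2`. -/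
noncomputable def fibPoly (m : ℕ) : Polynomial (ZMod 2) :=
  ∑ i ∈ fibSet m, X ^ i

/-!
Write `f m` for `fibPoly m`. A fibbinary number ends in `0` or in `01`, which gives
`f (m + 2) = f (m + 1) ^ 2 + X * f m ^ 4` after applying Frobenius. Feeding this recurrence into
itself yields a second one, `f (m + 2) = 1 + X * f (m + 1) * f m ^ 2`, and the two together give
the Cassini-type identity `f (m + 1) * f (m + 2) = f m ^ 2 + X ^ (2 ^ (m + 2) - 1)`. The theorem is
`X` times the square of the latter, with `f (m + 2)` eliminated by means of the recurrences.
-/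

theorem pow_two_pow_succ_sub_one {M : Type*} [Monoid M] (x : M) (n : ℕ) :
    x ^ (2 ^ (n + 1) - 1) = x * (x ^ (2 ^ n - 1)) ^ 2 := by
  have exponent_eq : 2 ^ (n + 1) - 1 = (2 ^ n - 1) * 2 + 1 := by
    have := Nat.two_pow_pos n
    omega
  rw [exponent_eq, pow_succ', pow_mul]

theorem sum_X_pow_pow_expChar_pow {R : Type*} [CommSemiring R] (p n : ℕ) [ExpChar R p]
    (s : Finset ℕ) :
    (∑ i ∈ s, (X : R[X]) ^ i) ^ p ^ n = ∑ i ∈ s, (X : R[X]) ^ (p ^ n * i) := by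
  rw [sum_pow_char_pow]
  exact Finset.sum_congr rfl fun i _ => (pow_mul' X (p ^ n) i).symm

/-- A natural number is *fibbinary* if its binary representation has no two consecutive ones;
this is the predicate cutting out `fibSet m` from `{0, …, 2 ^ m - 1}`. -/
def IsFibbinary (i : ℕ) : Prop :=
  ∀ j : ℕ, ¬(i.testBit j ∧ i.testBit (j + 1))

theorem mem_fibSet {m i : ℕ} : i ∈ fibSet m ↔ i < 2 ^ m ∧ IsFibbinary i := by
  simp [fibSet, IsFibbinary]

namespace IsFibbinary

theorem iff_div_two {i : ℕ} :
    IsFibbinary i ↔ ¬(i.testBit 0 ∧ (i / 2).testBit 0) ∧ IsFibbinary (i / 2) := by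
  simp only [IsFibbinary, Nat.testBit_div_two]
  exact Nat.and_forall_add_one.symm

theorem zero : IsFibbinary 0 := by
  simp [IsFibbinary]

theorem two_mul_iff {i : ℕ} : IsFibbinary (2 * i) ↔ IsFibbinary i := by
  simp [iff_div_two (i := 2 * i)]

theorem two_mul_add_one_iff {i : ℕ} : IsFibbinary (2 * i + 1) ↔ Even i ∧ IsFibbinary i := by
  have half_eq : (2 * i + 1) / 2 = i := by omega
  simp [iff_div_two (i := 2 * i + 1), half_eq, Nat.even_iff]

theorem four_mul_add_one_iff {i : ℕ} : IsFibbinary (4 * i + 1) ↔ IsFibbinary i := by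
  rw [show 4 * i + 1 = 2 * (2 * i) + 1 by ring, two_mul_add_one_iff, two_mul_iff]
  exact and_iff_right (even_two_mul i)

end IsFibbinary

theorem fibSet_zero : fibSet 0 = {0} := by
  ext i
  simp +contextual [mem_fibSet, iff_def, IsFibbinary.zero]

theorem fibSet_one : fibSet 1 = {0, 1} := by
  have one : IsFibbinary 1 := IsFibbinary.four_mul_add_one_iff.mpr IsFibbinary.zero
  ext i
  simp only [mem_fibSet, Finset.mem_insert, Finset.mem_singleton]
  constructor
  · omega
  · rintro (rfl | rfl)
    · exact ⟨by norm_num, IsFibbinary.zero⟩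
    · exact ⟨by norm_num, one⟩

theorem fibSet_add_two (m : ℕ) :
    fibSet (m + 2) = (fibSet (m + 1)).image (2 * ·) ∪ (fibSet m).image (4 * · + 1) := by
  have pow_add_two : 2 ^ (m + 2) = 4 * 2 ^ m := by ring
  ext i
  simp only [Finset.mem_union, Finset.mem_image, mem_fibSet]
  constructor
  · rintro ⟨lt, fib⟩
    obtain ⟨k, rfl | rfl⟩ := Nat.even_or_odd' i
    · exact .inl ⟨k, ⟨by omega, IsFibbinary.two_mul_iff.mp fib⟩, rfl⟩
    · obtain ⟨even_k, fib_k⟩ := IsFibbinary.two_mul_add_one_iff.mp fib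
      obtain ⟨l, rfl⟩ := even_iff_exists_two_mul.mp even_k
      exact .inr ⟨l, ⟨by omega, IsFibbinary.two_mul_iff.mp fib_k⟩, by ring⟩
  · rintro (⟨k, ⟨lt, fib⟩, rfl⟩ | ⟨l, ⟨lt, fib⟩, rfl⟩)
    · exact ⟨by omega, IsFibbinary.two_mul_iff.mpr fib⟩
    · exact ⟨by omega, IsFibbinary.four_mul_add_one_iff.mpr fib⟩

theorem sum_fibSet_add_two {M : Type*} [AddCommMonoid M] (g : ℕ → M) (m : ℕ) :
    ∑ i ∈ fibSet (m + 2), g i =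
      ∑ i ∈ fibSet (m + 1), g (2 * i) + ∑ i ∈ fibSet m, g (4 * i + 1) := by
  have disjoint : Disjoint ((fibSet (m + 1)).image (2 * ·)) ((fibSet m).image (4 * · + 1)) := by
    simp only [Finset.disjoint_left, Finset.mem_image]
    omega
  have two_mul_injective : Function.Injective (2 * · : ℕ → ℕ) := fun _ _ => by grind
  have four_mul_add_one_injective : Function.Injective (4 * · + 1 : ℕ → ℕ) := fun _ _ => by grind
  rw [fibSet_add_two, Finset.sum_union disjoint, Finset.sum_image two_mul_injective.injOn,
    Finset.sum_image four_mul_add_one_injective.injOn]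

theorem fibPoly_zero : fibPoly 0 = 1 := by
  simp [fibPoly, fibSet_zero]

theorem fibPoly_one : fibPoly 1 = 1 + X := by
  simp [fibPoly, fibSet_one]

theorem fibPoly_pow_two_pow (m n : ℕ) :
    fibPoly m ^ 2 ^ n = ∑ i ∈ fibSet m, (X : (ZMod 2)[X]) ^ (2 ^ n * i) :=
  sum_X_pow_pow_expChar_pow 2 n (fibSet m)

theorem fibPoly_add_two (m : ℕ) :
    fibPoly (m + 2) = fibPoly (m + 1) ^ 2 + X * fibPoly m ^ 4 := by
  have sq_eq : fibPoly (m + 1) ^ 2 = ∑ i ∈ fibSet (m + 1), X ^ (2 * i) :=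
    fibPoly_pow_two_pow (m + 1) 1
  have pow_four_eq : fibPoly m ^ 4 = ∑ i ∈ fibSet m, X ^ (4 * i) :=
    fibPoly_pow_two_pow m 2
  rw [sq_eq, pow_four_eq, fibPoly, sum_fibSet_add_two, Finset.mul_sum]
  simp only [pow_succ']

theorem fibPoly_add_two_eq_one_add (m : ℕ) :
    fibPoly (m + 2) = 1 + X * fibPoly (m + 1) * fibPoly m ^ 2 := by
  induction m with
  | zero =>
    rw [fibPoly_add_two, zero_add, fibPoly_one, fibPoly_zero, CharTwo.add_sq]
    ring
  | succ m ih =>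
    calc fibPoly (m + 3)
      _ = fibPoly (m + 2) ^ 2 + X * fibPoly (m + 1) ^ 4 := fibPoly_add_two (m + 1)
      _ = 1 + X * (fibPoly (m + 1) ^ 2 + X * fibPoly m ^ 4) * fibPoly (m + 1) ^ 2 := by
        rw [ih, CharTwo.add_sq]
        ring
      _ = 1 + X * fibPoly (m + 2) * fibPoly (m + 1) ^ 2 := by rw [← fibPoly_add_two]

theorem fibPoly_succ_mul_fibPoly_add_two (m : ℕ) :
    fibPoly (m + 1) * fibPoly (m + 2) = fibPoly m ^ 2 + X ^ (2 ^ (m + 2) - 1) := by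
  induction m with
  | zero =>
    rw [fibPoly_add_two_eq_one_add, zero_add, fibPoly_one, fibPoly_zero]
    linear_combination (X + X ^ 2) * CharTwo.two_eq_zero (R := (ZMod 2)[X])
  | succ m ih =>
    calc fibPoly (m + 2) * fibPoly (m + 3)
      _ = fibPoly (m + 2) + X * (fibPoly (m + 1) * fibPoly (m + 2)) ^ 2 := by
        rw [fibPoly_add_two_eq_one_add (m + 1)]
        ring
      _ = fibPoly (m + 2) + X * fibPoly m ^ 4 + X ^ (2 ^ (m + 3) - 1) := by
        rw [ih, CharTwo.add_sq, pow_two_pow_succ_sub_one X (m + 2)]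
        ring
      _ = fibPoly (m + 1) ^ 2 + X ^ (2 ^ (m + 3) - 1) := by
        rw [fibPoly_add_two, CharTwo.add_cancel_right]

theorem split_identity_general (m : ℕ) :
    (X ^ (2 ^ (m + 3) - 1) + 1 : (ZMod 2)[X]) =
      (1 + X) * fibPoly (m + 1) ^ 2 + X * fibPoly m ^ 2 * fibPoly (m + 1) +
        X ^ 3 * fibPoly m ^ 4 * fibPoly (m + 1) ^ 4 := by
  have X_pow_eq : (X ^ (2 ^ (m + 2) - 1) : (ZMod 2)[X]) =
      fibPoly m ^ 2 + fibPoly (m + 1) * fibPoly (m + 2) := by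
    rw [fibPoly_succ_mul_fibPoly_add_two, CharTwo.add_cancel_left]
  have X_mul_pow_four : X * fibPoly m ^ 4 = fibPoly (m + 1) ^ 2 + fibPoly (m + 2) := by
    rw [fibPoly_add_two, CharTwo.add_cancel_left]
  calc (X ^ (2 ^ (m + 3) - 1) + 1 : (ZMod 2)[X])
    _ = X * (fibPoly m ^ 2 + fibPoly (m + 1) * fibPoly (m + 2)) ^ 2 + 1 := by
      rw [pow_two_pow_succ_sub_one X (m + 2), X_pow_eq]
    _ = X * fibPoly m ^ 4 + X * fibPoly (m + 1) ^ 2 * fibPoly (m + 2) ^ 2 + 1 := by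
      rw [CharTwo.add_sq]
      ring
    _ = fibPoly (m + 1) ^ 2 + (fibPoly (m + 2) + 1) +
          X * fibPoly (m + 1) ^ 2 * fibPoly (m + 2) ^ 2 := by
      rw [X_mul_pow_four]
      ring
    _ = _ := by
      rw [fibPoly_add_two_eq_one_add, CharTwo.add_sq]
      linear_combination CharTwo.two_eq_zero (R := (ZMod 2)[X])

theorem split_identity (m : ℕ) (hm : 3 ≤ m) :
    (X ^ (2 ^ (m + 2) - 1) + 1 : Polynomial (ZMod 2)) =
      (1 + X) * (fibPoly m) ^ 2 + X * (fibPoly (m - 1)) ^ 2 * fibPoly m +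
        X ^ 3 * (fibPoly (m - 1)) ^ 4 * (fibPoly m) ^ 4 := by
  obtain ⟨n, rfl⟩ := Nat.exists_eq_add_of_le' (Nat.one_le_of_lt hm)
  exact split_identity_general n
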